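/- arXiv:2211.10783 — 2 statements merged into one kernel-verified Lean document; each statement's English description precedes it below -/
import Mathlib

section
/- Let d ≥ 1, γ > 0, and let f : ℝ^d → ℝ be M-Lipschitz continuous. Let f_γ(x) := E[f(x + γ·ẽ)], where ẽ is uniformly distributed on the Euclidean unit ball B₂^d(1). Then f_γ is differentiable at every x ∈ ℝ^d with gradient ∇f_γ(x) = E_e[(d/γ)·f(x + γe)·e], where e is uniformly distributed on the Euclidean unit sphere S₂^d(1). -/
open MeasureTheory
open scoped ENNReal RealInnerProductSpace

noncomputable section

/-- The `l_p` norm on `EuclideanSpace ℝ (Fin d)` (with `p = ∞` giving the sup norm). -/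
def lpNorm {d : ℕ} (p : ℝ≥0∞) (x : EuclideanSpace ℝ (Fin d)) : ℝ :=
  if p = ∞ then ⨆ i, |x i| else (∑ i, |x i| ^ p.toReal) ^ (1 / p.toReal)

/-- The unit `l₁`-ball `B₁^d(1)`. -/
def l1Ball (d : ℕ) : Set (EuclideanSpace ℝ (Fin d)) := {u | ∑ i, |u i| ≤ 1}

/-- The Euclidean unit ball `B₂^d(1)`. -/
def l2Ball (d : ℕ) : Set (EuclideanSpace ℝ (Fin d)) := {u | ‖u‖ ≤ 1}

/-- The unit `l₁`-sphere `S₁^d(1)`. -/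
def l1Sphere (d : ℕ) : Set (EuclideanSpace ℝ (Fin d)) := {u | ∑ i, |u i| = 1}

/-- The Euclidean unit sphere `S₂^d(1)`. -/
def l2Sphere (d : ℕ) : Set (EuclideanSpace ℝ (Fin d)) := {u | ‖u‖ = 1}

/-- Uniform probability distribution on a solid body: normalized Lebesgue measure. -/
def uniformOn {d : ℕ} (S : Set (EuclideanSpace ℝ (Fin d))) :
    Measure (EuclideanSpace ℝ (Fin d)) :=
  (volume S)⁻¹ • volume.restrict S

/-- Uniform probability distribution on a hypersurface: normalized `(d-1)`-dimensional
Hausdorff measure. -/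
def uniformOnSphere {d : ℕ} (S : Set (EuclideanSpace ℝ (Fin d))) :
    Measure (EuclideanSpace ℝ (Fin d)) :=
  (μH[(d : ℝ) - 1] S)⁻¹ • (μH[(d : ℝ) - 1]).restrict S

/-- Coordinatewise sign vector `sign(e)`. -/
def signVec {d : ℕ} (e : EuclideanSpace ℝ (Fin d)) : EuclideanSpace ℝ (Fin d) :=
  (WithLp.equiv 2 (Fin d → ℝ)).symm (fun i => Real.sign (e i))

end

/-!
In polar coordinates, the integral of a continuous `g` over the unit ball centred at `y` is
`∫_S ∫_0^{ρ(y, e)} r ^ (dim E - 1) • g (r • e) dr dσ(e)`, where `ρ(y, ·)` is the radial function of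
that ball. Since `ρ(0, e) = 1` and `ρ(·, e)` has derivative `⟪e, ·⟫` at `0`, differentiating under
the integral sign leaves exactly the boundary term `∫_S ⟪e, ·⟫ g(e) dσ(e)`. The general point `x`
and radius `γ` follow by translation and scaling; `σ(S) = dim E * vol(B)` gives the factor `d / γ`.

The measure `σ` of polar coordinates and the Hausdorff measure on the sphere are both invariant
under rotations, so all balls of equal radius have equal measure. Two such probability measures
coincide: evaluate `(μ × ν) {(x, y) | dist x y < r}` by Fubini in both orders.
-/

open Metric Set Module
open scoped Pointwise

section UniformlyDistributed

variable {X : Type*} [PseudoMetricSpace X] [MeasurableSpace X]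

/-- A measure is uniformly distributed if the measure of a ball depends only on its radius. This
determines a probability measure, so it singles out the uniform distribution on the sphere. -/
def IsUniformlyDistributed (μ : Measure X) : Prop :=
  ∀ x y r, μ (ball x r) = μ (ball y r)

lemma isUniformlyDistributed_of_forall_exists_isometryEquiv [OpensMeasurableSpace X]
    {μ : Measure X} (h : ∀ x y, ∃ φ : X ≃ᵢ X, φ x = y ∧ MeasurePreserving φ μ μ) :
    IsUniformlyDistributed μ := by
  intro x y r
  obtain ⟨φ, rfl, hφ⟩ := h x y
  rw [← hφ.measure_preimage (s := ball (φ x) r) measurableSet_ball.nullMeasurableSet,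
    φ.preimage_ball, φ.symm_apply_apply]

lemma IsUniformlyDistributed.smul {μ : Measure X} (hμ : IsUniformlyDistributed μ) (c : ℝ≥0∞) :
    IsUniformlyDistributed (c • μ) := fun x y r ↦ by
  rw [Measure.smul_apply, Measure.smul_apply, hμ x y r]

variable [SecondCountableTopology X]

lemma IsUniformlyDistributed.measure_ball_pos {μ : Measure X} [NeZero μ]
    (hμ : IsUniformlyDistributed μ) (x : X) {r : ℝ} (hr : 0 < r) : 0 < μ (ball x r) := by
  obtain ⟨y, -, hy⟩ := exists_mem_forall_mem_nhdsWithin_pos_measure (NeZero.ne (μ univ))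
  rw [hμ x y r]
  exact hy _ (mem_nhdsWithin_of_mem_nhds (ball_mem_nhds y hr))

lemma lintegral_measure_ball_comm [OpensMeasurableSpace X] (μ ν : Measure X) [SFinite μ]
    [SFinite ν] (r : ℝ) : ∫⁻ x, ν (ball x r) ∂μ = ∫⁻ y, μ (ball y r) ∂ν := by
  have hmeas : MeasurableSet {p : X × X | dist p.2 p.1 < r} :=
    (isOpen_lt (by fun_prop) (by fun_prop)).measurableSet
  calc ∫⁻ x, ν (ball x r) ∂μ = μ.prod ν {p | dist p.2 p.1 < r} := (Measure.prod_apply hmeas).symm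
    _ = ∫⁻ y, μ (ball y r) ∂ν := by
      rw [Measure.prod_apply_symm hmeas]
      simp only [preimage_ofPred_eq, ball, dist_comm]

namespace IsUniformlyDistributed

variable {μ ν : Measure X}

lemma measure_mul_measure_ball_le [OpensMeasurableSpace X] [SFinite μ] [SFinite ν]
    (hμ : IsUniformlyDistributed μ) (hν : IsUniformlyDistributed ν)
    (s : Set X) (x : X) (r : ℝ) :
    μ s * ν (ball x r) ≤ μ (ball x r) * ν (thickening r s) := by
  have hball (y : X) :
      μ.restrict s (ball y r) ≤ (thickening r s).indicator (fun _ ↦ μ (ball x r)) y := by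
    rw [Measure.restrict_apply measurableSet_ball]
    by_cases hy : y ∈ thickening r s
    · rw [indicator_of_mem hy, ← hμ y x r]
      exact measure_mono inter_subset_left
    · have hempty : ball y r ∩ s = ∅ := eq_empty_of_forall_notMem fun z hz ↦
        hy (mem_thickening_iff.2 ⟨z, hz.2, mem_ball'.1 hz.1⟩)
      simp [hempty]
  calc μ s * ν (ball x r) = ∫⁻ y in s, ν (ball y r) ∂μ := by
        simp only [hν _ x r, setLIntegral_const, mul_comm]
    _ = ∫⁻ y, μ.restrict s (ball y r) ∂ν := lintegral_measure_ball_comm _ _ r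
    _ ≤ ∫⁻ y, (thickening r s).indicator (fun _ ↦ μ (ball x r)) y ∂ν := lintegral_mono hball
    _ = μ (ball x r) * ν (thickening r s) :=
        lintegral_indicator_const isOpen_thickening.measurableSet _

variable [IsProbabilityMeasure μ] [IsProbabilityMeasure ν]

lemma measure_ball_le [OpensMeasurableSpace X] (hμ : IsUniformlyDistributed μ)
    (hν : IsUniformlyDistributed ν) (x : X) (r : ℝ) :
    ν (ball x r) ≤ μ (ball x r) :=
  calc ν (ball x r) = μ univ * ν (ball x r) := by rw [measure_univ, one_mul]
    _ ≤ μ (ball x r) * ν (thickening r univ) := hμ.measure_mul_measure_ball_le hν univ x r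
    _ ≤ μ (ball x r) := mul_le_of_le_one_right' prob_le_one

lemma measure_le_of_isClosed [OpensMeasurableSpace X] (hμ : IsUniformlyDistributed μ)
    (hν : IsUniformlyDistributed ν) {s : Set X} (hs : IsClosed s) :
    μ s ≤ ν s := by
  obtain ⟨x⟩ : Nonempty X := nonempty_of_isProbabilityMeasure μ
  have hthick (r : ℝ) (hr : 0 < r) : μ s ≤ ν (thickening r s) := by
    have hball : ν (ball x r) = μ (ball x r) :=
      (hμ.measure_ball_le hν x r).antisymm (hν.measure_ball_le hμ x r)
    have hle := hμ.measure_mul_measure_ball_le hν s x r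
    rw [hball, mul_comm] at hle
    exact (ENNReal.mul_le_mul_iff_right (hμ.measure_ball_pos x hr).ne' (measure_ne_top _ _)).1 hle
  exact ge_of_tendsto
    (tendsto_measure_thickening_of_isClosed ⟨1, one_pos, measure_ne_top _ _⟩ hs)
    (by filter_upwards [self_mem_nhdsWithin] with r hr using hthick r hr)

theorem eq_of_isProbabilityMeasure [BorelSpace X] (hμ : IsUniformlyDistributed μ)
    (hν : IsUniformlyDistributed ν) : μ = ν :=
  ext_of_generate_finite {s | IsClosed s}
    (by rw [BorelSpace.measurable_eq (α := X), borel_eq_generateFrom_isClosed]) isPiSystem_isClosed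
    (fun _ hs ↦ (hμ.measure_le_of_isClosed hν hs).antisymm (hν.measure_le_of_isClosed hμ hs))
    (by simp only [measure_univ])

end IsUniformlyDistributed

theorem IsUniformlyDistributed.average_eq [BorelSpace X] {μ ν : Measure X}
    (hμ : IsUniformlyDistributed μ) (hν : IsUniformlyDistributed ν) [IsFiniteMeasure μ]
    [IsFiniteMeasure ν] [NeZero μ] [NeZero ν] {F : Type*} [NormedAddCommGroup F] [NormedSpace ℝ F]
    (f : X → F) : ⨍ x, f x ∂μ = ⨍ x, f x ∂ν := by
  rw [average_eq', average_eq',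
    (hμ.smul (μ univ)⁻¹).eq_of_isProbabilityMeasure (hν.smul (ν univ)⁻¹)]

end UniformlyDistributed

section SphereIsometry

variable {E : Type*} [NormedAddCommGroup E] [NormedSpace ℝ E]

/-- The isometry of the unit sphere induced by a linear isometry of the ambient space: the rotations
and reflections under which the measures on the sphere are invariant. -/
def sphereIsometryEquiv (L : E ≃ₗᵢ[ℝ] E) : sphere (0 : E) 1 ≃ᵢ sphere (0 : E) 1 where
  toEquiv := L.toEquiv.subtypeEquiv fun x ↦ by simp
  isometry_toFun := fun x y ↦ L.isometry x y

@[simp]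
lemma coe_sphereIsometryEquiv (L : E ≃ₗᵢ[ℝ] E) (x : sphere (0 : E) 1) :
    (sphereIsometryEquiv L x : E) = L x := rfl

lemma smul_image_preimage_sphereIsometryEquiv (L : E ≃ₗᵢ[ℝ] E) (t : Set ℝ)
    (s : Set (sphere (0 : E) 1)) :
    t • ((↑) '' (sphereIsometryEquiv L ⁻¹' s) : Set E) = L ⁻¹' (t • ((↑) '' s)) := by
  ext z
  constructor
  · rintro ⟨a, ha, _, ⟨e, he, rfl⟩, rfl⟩
    exact ⟨a, ha, _, ⟨_, he, rfl⟩, (map_smul L a (e : E)).symm⟩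
  · rintro ⟨a, ha, _, ⟨e, he, rfl⟩, hz⟩
    obtain ⟨e, rfl⟩ := (sphereIsometryEquiv L).surjective e
    exact ⟨a, ha, _, ⟨e, he, rfl⟩, L.injective ((map_smul L a (e : E)).trans hz)⟩

variable [MeasurableSpace E] [BorelSpace E] {μ : Measure E}

lemma measurePreserving_sphereIsometryEquiv {L : E ≃ₗᵢ[ℝ] E} (hL : MeasurePreserving L μ μ) :
    MeasurePreserving (sphereIsometryEquiv L) μ.toSphere μ.toSphere := by
  have hmeas : Measurable (sphereIsometryEquiv L) := (sphereIsometryEquiv L).continuous.measurable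
  refine ⟨hmeas, Measure.ext fun s hs ↦ ?_⟩
  rw [Measure.map_apply hmeas hs, μ.toSphere_apply' hs, μ.toSphere_apply' (hmeas hs),
    smul_image_preimage_sphereIsometryEquiv,
    hL.measure_preimage_emb L.toHomeomorph.measurableEmbedding]

end SphereIsometry

section UniformOnSphere

lemma setAverage_hausdorffMeasure_eq_average {X F : Type*} [EMetricSpace X] [MeasurableSpace X]
    [BorelSpace X] [NormedAddCommGroup F] [NormedSpace ℝ F] {s : Set X} (hs : MeasurableSet s)
    {d : ℝ} (hd : 0 ≤ d) (f : X → F) :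
    ⨍ x in s, f x ∂μH[d] = ⨍ x : s, f x ∂μH[d] := by
  have hmap : Measure.map ((↑) : s → X) μH[d] = μH[d].restrict s := by
    rw [isometry_subtype_coe.map_hausdorffMeasure (Or.inl hd), Subtype.range_coe]
  rw [← hmap, average_eq, average_eq, (MeasurableEmbedding.subtype_coe hs).integral_map,
    map_measureReal_apply measurable_subtype_coe .univ, preimage_univ]

variable {E : Type*} [NormedAddCommGroup E] [InnerProductSpace ℝ E]

lemma exists_sphereIsometryEquiv_apply_eq (x y : sphere (0 : E) 1) :
    ∃ L : E ≃ₗᵢ[ℝ] E, sphereIsometryEquiv L x = y :=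
  ⟨(ℝ ∙ ((x : E) - y))ᗮ.reflection, Subtype.ext <| by
    rw [coe_sphereIsometryEquiv, Submodule.reflection_sub (by simp)]⟩

lemma natCast_finrank_orthogonal_span_singleton [FiniteDimensional ℝ E] {v : E} (hv : v ≠ 0) :
    (finrank ℝ (ℝ ∙ v)ᗮ : ℝ) = finrank ℝ E - 1 := by
  rw [← (ℝ ∙ v).finrank_add_finrank_orthogonal, finrank_span_singleton hv]
  push_cast
  ring

lemma hemisphere_subset_image_stereoInvFunAux {v : E} (hv : ‖v‖ = 1) :
    {x ∈ sphere (0 : E) 1 | ⟪v, x⟫ ≤ 0} ⊆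
      (fun w : (ℝ ∙ v)ᗮ ↦ stereoInvFunAux v (w : E)) '' closedBall 0 2 := by
  rintro x ⟨hx, hvx⟩
  have hx1 : ‖x‖ = 1 := mem_sphere_zero_iff_norm.1 hx
  have hne : x ≠ v := by
    rintro rfl
    rw [real_inner_self_eq_norm_sq, hv] at hvx
    norm_num at hvx
  refine ⟨stereoToFun v x, ?_, congrArg Subtype.val (stereo_left_inv hv (x := ⟨x, hx⟩) hne)⟩
  have hproj : ‖(ℝ ∙ v)ᗮ.orthogonalProjectionOnto x‖ ≤ 1 :=
    hx1 ▸ (ℝ ∙ v)ᗮ.norm_orthogonalProjectionOnto_apply_le x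
  have hscale : ‖2 / (1 - ⟪v, x⟫)‖ ≤ 2 := by
    rw [Real.norm_of_nonneg (div_nonneg two_pos.le (by linarith)), div_le_iff₀ (by linarith)]
    linarith
  rw [mem_closedBall_zero_iff, stereoToFun_apply, norm_smul, innerSL_apply_apply]
  calc ‖2 / (1 - ⟪v, x⟫)‖ * ‖(ℝ ∙ v)ᗮ.orthogonalProjectionOnto x‖ ≤ 2 * 1 := by gcongr
    _ = 2 := mul_one 2

lemma ball_subset_orthogonalProjectionOnto_image_sphere {v : E} (hv : ‖v‖ = 1) :
    ball (0 : (ℝ ∙ v)ᗮ) 1 ⊆ (ℝ ∙ v)ᗮ.orthogonalProjectionOnto '' sphere (0 : E) 1 := by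
  intro w hw
  rw [mem_ball_zero_iff] at hw
  have hinner : ⟪(w : E), v⟫ = 0 := Submodule.mem_orthogonal_singleton_iff_inner_left.mp w.2
  refine ⟨w + √(1 - ‖w‖ ^ 2) • v, ?_, ?_⟩
  · rw [mem_sphere_zero_iff_norm, ← sq_eq_sq₀ (norm_nonneg _) zero_le_one, norm_add_sq_real,
      inner_smul_right, hinner, norm_smul, hv, Real.norm_of_nonneg (Real.sqrt_nonneg _), mul_one,
      Real.sq_sqrt (by nlinarith [norm_nonneg w]), Submodule.coe_norm]
    ring
  · rw [map_add, map_smul,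
      Submodule.orthogonalProjectionOnto_orthogonalComplement_singleton_eq_zero,
      Submodule.orthogonalProjectionOnto_mem_subspace_eq_self, smul_zero, add_zero]

variable [MeasurableSpace E] [BorelSpace E]

lemma isUniformlyDistributed_hausdorffMeasure_sphere (s : ℝ) :
    IsUniformlyDistributed (μH[s] : Measure (sphere (0 : E) 1)) :=
  isUniformlyDistributed_of_forall_exists_isometryEquiv fun x y ↦
    let ⟨L, hL⟩ := exists_sphereIsometryEquiv_apply_eq x y
    ⟨sphereIsometryEquiv L, hL, (sphereIsometryEquiv L).measurePreserving_hausdorffMeasure s⟩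

variable [FiniteDimensional ℝ E]

lemma isUniformlyDistributed_toSphere_volume :
    IsUniformlyDistributed (volume : Measure E).toSphere :=
  isUniformlyDistributed_of_forall_exists_isometryEquiv fun x y ↦
    let ⟨L, hL⟩ := exists_sphereIsometryEquiv_apply_eq x y
    ⟨sphereIsometryEquiv L, hL, measurePreserving_sphereIsometryEquiv L.measurePreserving⟩

lemma hausdorffMeasure_image_lt_top_of_lipschitzOnWith {X : Type*} [EMetricSpace X]
    [MeasurableSpace X] [BorelSpace X] {f : E → X} {s : Set E} {K : NNReal}
    (hf : LipschitzOnWith K f s) (hs : Bornology.IsBounded s) :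
    μH[(finrank ℝ E : ℝ)] (f '' s) < ∞ := by
  refine (hf.hausdorffMeasure_image_le (Nat.cast_nonneg _)).trans_lt (ENNReal.mul_lt_top ?_ ?_)
  · exact ENNReal.rpow_lt_top_of_nonneg (Nat.cast_nonneg _) ENNReal.coe_ne_top
  · exact hs.measure_lt_top

lemma hausdorffMeasure_hemisphere_lt_top {v : E} (hv : ‖v‖ = 1) :
    μH[(finrank ℝ (ℝ ∙ v)ᗮ : ℝ)] {x ∈ sphere (0 : E) 1 | ⟪v, x⟫ ≤ 0} < ∞ := by
  have hsmooth : ContDiff ℝ 1 (fun w : (ℝ ∙ v)ᗮ ↦ stereoInvFunAux v (w : E)) :=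
    contDiff_stereoInvFunAux.comp (ℝ ∙ v)ᗮ.subtypeL.contDiff
  obtain ⟨K, hK⟩ := hsmooth.contDiffOn.exists_lipschitzOnWith (s := closedBall 0 2) one_ne_zero
    (convex_closedBall _ _) (isCompact_closedBall _ _)
  exact (measure_mono (hemisphere_subset_image_stereoInvFunAux hv)).trans_lt
    (hausdorffMeasure_image_lt_top_of_lipschitzOnWith hK isBounded_closedBall)

variable [Nontrivial E]

variable (E) in
lemma hausdorffMeasure_sphere_lt_top : μH[finrank ℝ E - 1] (sphere (0 : E) 1) < ∞ := by
  obtain ⟨v, hv⟩ := exists_norm_eq E zero_le_one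
  have hv0 : v ≠ 0 := norm_ne_zero_iff.1 (hv ▸ one_ne_zero)
  have hcover : sphere (0 : E) 1 ⊆
      {x ∈ sphere (0 : E) 1 | ⟪v, x⟫ ≤ 0} ∪ {x ∈ sphere (0 : E) 1 | ⟪-v, x⟫ ≤ 0} := fun x hx ↦
    (le_total ⟪v, x⟫ 0).imp (⟨hx, ·⟩) fun h ↦ ⟨hx, by simpa⟩
  have hpos := hausdorffMeasure_hemisphere_lt_top hv
  have hneg := hausdorffMeasure_hemisphere_lt_top ((norm_neg v).trans hv)
  rw [natCast_finrank_orthogonal_span_singleton hv0] at hpos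
  rw [natCast_finrank_orthogonal_span_singleton (neg_ne_zero.2 hv0)] at hneg
  exact (measure_mono hcover).trans_lt (measure_union_lt_top hpos hneg)

variable (E) in
lemma hausdorffMeasure_sphere_pos : 0 < μH[finrank ℝ E - 1] (sphere (0 : E) 1) := by
  obtain ⟨v, hv⟩ := exists_norm_eq E zero_le_one
  have hv0 : v ≠ 0 := norm_ne_zero_iff.1 (hv ▸ one_ne_zero)
  rw [← natCast_finrank_orthogonal_span_singleton hv0]
  calc 0 < μH[(finrank ℝ (ℝ ∙ v)ᗮ : ℝ)] (ball (0 : (ℝ ∙ v)ᗮ) 1) := measure_ball_pos _ _ one_pos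
    _ ≤ μH[(finrank ℝ (ℝ ∙ v)ᗮ : ℝ)]
          ((ℝ ∙ v)ᗮ.orthogonalProjectionOnto '' sphere (0 : E) 1) :=
      measure_mono (ball_subset_orthogonalProjectionOnto_image_sphere hv)
    _ ≤ μH[(finrank ℝ (ℝ ∙ v)ᗮ : ℝ)] (sphere (0 : E) 1) := by
      simpa using (ℝ ∙ v)ᗮ.lipschitzWith_orthogonalProjectionOnto.hausdorffMeasure_image_le
        (Nat.cast_nonneg _) (sphere (0 : E) 1)

theorem setAverage_sphere_hausdorffMeasure_eq_average_toSphere {F : Type*} [NormedAddCommGroup F]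
    [NormedSpace ℝ F] (f : E → F) :
    ⨍ e in sphere (0 : E) 1, f e ∂μH[finrank ℝ E - 1] =
      ⨍ e : sphere (0 : E) 1, f e ∂(volume : Measure E).toSphere := by
  have hdim : (0 : ℝ) ≤ finrank ℝ E - 1 := sub_nonneg.2 (by exact_mod_cast finrank_pos)
  have huniv : μH[finrank ℝ E - 1] (univ : Set (sphere (0 : E) 1)) =
      μH[finrank ℝ E - 1] (sphere (0 : E) 1) := by
    rw [← isometry_subtype_coe.hausdorffMeasure_image (Or.inl hdim), image_univ, Subtype.range_coe]
  have : IsFiniteMeasure (μH[finrank ℝ E - 1] : Measure (sphere (0 : E) 1)) :=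
    ⟨huniv ▸ hausdorffMeasure_sphere_lt_top E⟩
  have : NeZero (μH[finrank ℝ E - 1] : Measure (sphere (0 : E) 1)) :=
    ⟨fun h ↦ (hausdorffMeasure_sphere_pos E).ne'
      (by rw [← huniv, h, Measure.coe_zero, Pi.zero_apply])⟩
  have : NeZero (volume : Measure E).toSphere := ⟨Measure.toSphere_ne_zero _⟩
  rw [setAverage_hausdorffMeasure_eq_average isClosed_sphere.measurableSet hdim]
  exact (isUniformlyDistributed_hausdorffMeasure_sphere _).average_eq
    isUniformlyDistributed_toSphere_volume _

end UniformOnSphere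

section PolarCoordinates

lemma smul_homeomorphUnitSphereProd {E : Type*} [NormedAddCommGroup E] [NormedSpace ℝ E]
    (x : ({0}ᶜ : Set E)) :
    ((homeomorphUnitSphereProd E x).2 : ℝ) • ((homeomorphUnitSphereProd E x).1 : E) = x := by
  simp [smul_smul, norm_ne_zero_iff.2 x.2]

lemma integrable_smul_toSphere_prod {E F : Type*} [NormedAddCommGroup E] [NormedSpace ℝ E]
    [FiniteDimensional ℝ E] [MeasurableSpace E] [BorelSpace E] [NormedAddCommGroup F]
    {μ : Measure E} [μ.IsAddHaarMeasure] {f : E → F} (hf : Integrable f μ) :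
    Integrable (fun p : sphere (0 : E) 1 × Ioi (0 : ℝ) ↦ f ((p.2 : ℝ) • (p.1 : E)))
      (μ.toSphere.prod (.volumeIoiPow (finrank ℝ E - 1))) := by
  rw [← μ.measurePreserving_homeomorphUnitSphereProd.integrable_comp_emb
    (Homeomorph.measurableEmbedding _)]
  simp only [Function.comp_def, smul_homeomorphUnitSphereProd]
  exact (integrableOn_iff_comap_subtypeVal (measurableSet_singleton _).compl).1 hf.integrableOn

variable {F : Type*} [NormedAddCommGroup F] [NormedSpace ℝ F]

lemma integral_volumeIoiPow (n : ℕ) (f : ℝ → F) :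
    ∫ r, f r ∂Measure.volumeIoiPow n = ∫ r in Ioi (0 : ℝ), r ^ n • f r := by
  simp only [Measure.volumeIoiPow, ENNReal.ofReal]
  rw [integral_withDensity_eq_integral_smul
      (measurable_subtype_coe.pow_const n).real_toNNReal,
    integral_subtype_comap measurableSet_Ioi fun r : ℝ ↦ Real.toNNReal (r ^ n) • f r]
  refine setIntegral_congr_fun measurableSet_Ioi fun r hr ↦ ?_
  rw [NNReal.smul_def, Real.coe_toNNReal _ (pow_nonneg hr.out.le n)]

variable {E : Type*} [NormedAddCommGroup E] [NormedSpace ℝ E] [FiniteDimensional ℝ E]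
  [MeasurableSpace E] [BorelSpace E] {μ : Measure E} [μ.IsAddHaarMeasure] {f : E → F}

lemma integrable_radial_integral (hf : Integrable f μ) :
    Integrable (fun e : sphere (0 : E) 1 ↦
      ∫ r in Ioi (0 : ℝ), r ^ (finrank ℝ E - 1) • f (r • (e : E))) μ.toSphere :=
  (integrable_smul_toSphere_prod hf).integral_prod_left.congr
    (.of_forall fun e ↦ integral_volumeIoiPow _ fun r ↦ f (r • (e : E)))

lemma integral_eq_integral_toSphere [Nontrivial E] (hf : Integrable f μ) :
    ∫ x, f x ∂μ = ∫ e : sphere (0 : E) 1,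
      (∫ r in Ioi (0 : ℝ), r ^ (finrank ℝ E - 1) • f (r • (e : E))) ∂μ.toSphere :=
  calc ∫ x, f x ∂μ = ∫ x : ({0}ᶜ : Set E), f x ∂(μ.comap (↑)) := by
        rw [integral_subtype_comap (measurableSet_singleton _).compl f, restrict_compl_singleton]
    _ = ∫ p : sphere (0 : E) 1 × Ioi (0 : ℝ), f ((p.2 : ℝ) • (p.1 : E))
          ∂μ.toSphere.prod (.volumeIoiPow (finrank ℝ E - 1)) := by
        rw [← μ.measurePreserving_homeomorphUnitSphereProd.integral_comp
          (Homeomorph.measurableEmbedding _)]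
        simp only [smul_homeomorphUnitSphereProd]
    _ = ∫ e : sphere (0 : E) 1, (∫ r, f ((r : ℝ) • (e : E))
          ∂Measure.volumeIoiPow (finrank ℝ E - 1)) ∂μ.toSphere :=
        integral_prod _ (integrable_smul_toSphere_prod hf)
    _ = _ := integral_congr_ae
        (.of_forall fun e ↦ integral_volumeIoiPow _ fun r ↦ f (r • (e : E)))

end PolarCoordinates

section BallRadialFunction

variable {E : Type*} [NormedAddCommGroup E] [InnerProductSpace ℝ E] {y e : E}

/-- The radial function of the closed unit ball centred at `y`: if `‖y‖ < 1`, the distance from the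
origin to the boundary of the ball in the unit direction `e`. -/
noncomputable def ballRadial (y e : E) : ℝ := ⟪e, y⟫ + √(1 - ‖y‖ ^ 2 + ⟪e, y⟫ ^ 2)

@[simp]
lemma ballRadial_zero (e : E) : ballRadial 0 e = 1 := by simp [ballRadial]

lemma abs_inner_lt_sqrt (hy : ‖y‖ < 1) : |⟪e, y⟫| < √(1 - ‖y‖ ^ 2 + ⟪e, y⟫ ^ 2) := by
  apply Real.lt_sqrt_of_sq_lt
  rw [sq_abs]
  nlinarith [norm_nonneg y]

lemma ballRadial_pos (hy : ‖y‖ < 1) : 0 < ballRadial y e := by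
  have hlt := abs_inner_lt_sqrt (e := e) hy
  rw [ballRadial]
  linarith [neg_abs_le ⟪e, y⟫]

/- Completing the square, `‖r • e - y‖ ≤ 1` says `|r - ⟪e, y⟫| ≤ √(1 - ‖y‖ ^ 2 + ⟪e, y⟫ ^ 2)`. -/
lemma smul_mem_closedBall_iff_le_ballRadial (he : ‖e‖ = 1) (hy : ‖y‖ < 1) {r : ℝ} (hr : 0 ≤ r) :
    r • e ∈ closedBall y 1 ↔ r ≤ ballRadial y e := by
  have hlt := abs_inner_lt_sqrt (e := e) hy
  have hsq : ‖r • e - y‖ ^ 2 = (r - ⟪e, y⟫) ^ 2 + ‖y‖ ^ 2 - ⟪e, y⟫ ^ 2 := by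
    rw [norm_sub_sq_real, norm_smul, he, real_inner_smul_left, Real.norm_of_nonneg hr]
    ring
  calc r • e ∈ closedBall y 1 ↔ (r - ⟪e, y⟫) ^ 2 ≤ 1 - ‖y‖ ^ 2 + ⟪e, y⟫ ^ 2 := by
        rw [mem_closedBall_iff_norm, ← sq_le_one_iff₀ (norm_nonneg _), hsq]
        constructor <;> intro h <;> linarith
    _ ↔ |r - ⟪e, y⟫| ≤ √(1 - ‖y‖ ^ 2 + ⟪e, y⟫ ^ 2) := by
        rw [Real.le_sqrt (abs_nonneg _) (by nlinarith [norm_nonneg y]), sq_abs]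
    _ ↔ r ≤ ballRadial y e := by
        rw [abs_le, ballRadial, sub_le_iff_le_add']
        exact and_iff_right (by linarith [le_abs_self ⟪e, y⟫])

lemma abs_ballRadial_sub_one_le (he : ‖e‖ = 1) (hy : ‖y‖ < 1) :
    |ballRadial y e - 1| ≤ ‖y‖ := by
  have hpos : 0 < ballRadial y e := ballRadial_pos hy
  have hnorm (r : ℝ) (hr : 0 ≤ r) : ‖r • e‖ = r := by
    rw [norm_smul, he, mul_one, Real.norm_of_nonneg hr]
  have hupper : ballRadial y e ≤ 1 + ‖y‖ := by
    have hmem := (smul_mem_closedBall_iff_le_ballRadial he hy hpos.le).2 le_rfl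
    rw [mem_closedBall_iff_norm] at hmem
    linarith [norm_le_norm_add_norm_sub' (ballRadial y e • e) y, hnorm _ hpos.le]
  have hlower : 1 - ‖y‖ ≤ ballRadial y e := by
    have hr : 0 ≤ 1 - ‖y‖ := by linarith
    rw [← smul_mem_closedBall_iff_le_ballRadial he hy hr, mem_closedBall_iff_norm]
    linarith [norm_sub_le ((1 - ‖y‖) • e) y, hnorm _ hr]
  exact abs_le.2 ⟨by linarith, by linarith⟩

lemma hasFDerivAt_ballRadial_zero (e : E) :
    HasFDerivAt (fun y ↦ ballRadial y e) (innerSL ℝ e) 0 := by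
  have hinner : HasFDerivAt (fun y : E ↦ ⟪e, y⟫) (innerSL ℝ e) 0 := (innerSL ℝ e).hasFDerivAt
  have hnorm : HasFDerivAt (fun y : E ↦ ‖y‖ ^ 2) (2 • innerSL ℝ (0 : E)) 0 :=
    (hasStrictFDerivAt_norm_sq 0).hasFDerivAt
  have hsqrt := ((hnorm.const_sub 1).add (hinner.pow 2)).sqrt (by simp)
  refine (hinner.add hsqrt).congr_fderiv ?_
  simp

end BallRadialFunction

section BallIntegral

lemma integrable_indicator_closedBall {X F : Type*} [MetricSpace X] [ProperSpace X]
    [MeasurableSpace X] [OpensMeasurableSpace X] [NormedAddCommGroup F] (μ : Measure X)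
    [IsFiniteMeasureOnCompacts μ] {g : X → F} (hg : Continuous g) (x : X) (r : ℝ) :
    Integrable ((closedBall x r).indicator g) μ :=
  (hg.continuousOn.integrableOn_compact (isCompact_closedBall x r)).integrable_indicator
    measurableSet_closedBall

lemma setIntegral_closedBall_eq_setIntegral_closedBall_zero {E F : Type*} [NormedAddCommGroup E]
    [MeasurableSpace E] [BorelSpace E] [NormedAddCommGroup F] [NormedSpace ℝ F] (μ : Measure E)
    [μ.IsAddLeftInvariant] (g : E → F) (y : E) (r : ℝ) :
    ∫ u in closedBall y r, g u ∂μ = ∫ u in closedBall 0 r, g (y + u) ∂μ := by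
  rw [← (measurePreserving_add_left μ y).setIntegral_preimage_emb
    (Homeomorph.addLeft y).measurableEmbedding, preimage_add_closedBall, sub_self]

variable {E F : Type*} [NormedAddCommGroup E] [InnerProductSpace ℝ E]
  [NormedAddCommGroup F] [NormedSpace ℝ F] {g : E → F}

/-- The integral of `g` along the segment from `0` to `ρ • e`, with the Jacobian `r ^ (dim E - 1)`
of polar coordinates. -/
noncomputable def segmentIntegral (g : E → F) (e : E) (ρ : ℝ) : F :=
  ∫ r in (0)..ρ, r ^ (finrank ℝ E - 1) • g (r • e)

lemma hasDerivAt_segmentIntegral [CompleteSpace F] (hg : Continuous g) (e : E) (ρ : ℝ) :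
    HasDerivAt (segmentIntegral g e) (ρ ^ (finrank ℝ E - 1) • g (ρ • e)) ρ :=
  (Continuous.integral_hasStrictDerivAt (by fun_prop) 0 ρ).hasDerivAt

lemma hasFDerivAt_segmentIntegral_ballRadial_zero [CompleteSpace F] (hg : Continuous g) (e : E) :
    HasFDerivAt (fun y ↦ segmentIntegral g e (ballRadial y e))
      ((innerSL ℝ e).smulRight (g e)) 0 := by
  have hderiv := hasDerivAt_segmentIntegral hg e (ballRadial 0 e)
  refine (hderiv.hasFDerivAt.comp (0 : E) (hasFDerivAt_ballRadial_zero e)).congr_fderiv ?_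
  ext v
  simp

lemma integral_Ioi_indicator_closedBall_eq_segmentIntegral {y e : E} (he : ‖e‖ = 1) (hy : ‖y‖ < 1)
    (g : E → F) :
    ∫ r in Ioi (0 : ℝ), r ^ (finrank ℝ E - 1) • (closedBall y 1).indicator g (r • e) =
      segmentIntegral g e (ballRadial y e) := by
  rw [segmentIntegral, intervalIntegral.integral_of_le (ballRadial_pos hy).le, ← Ioi_inter_Iic,
    ← setIntegral_indicator measurableSet_Iic]
  refine setIntegral_congr_fun measurableSet_Ioi fun r hr ↦ ?_
  simp only [indicator, smul_mem_closedBall_iff_le_ballRadial he hy hr.out.le, mem_Iic, smul_ite,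
    smul_zero]

variable [FiniteDimensional ℝ E]

lemma exists_forall_norm_segmentIntegral_sub_le [CompleteSpace F] (hg : Continuous g) :
    ∃ C, ∀ e ∈ sphere (0 : E) 1, ∀ ρ ∈ Icc (0 : ℝ) 2,
      ‖segmentIntegral g e ρ - segmentIntegral g e 1‖ ≤ C * |ρ - 1| := by
  obtain ⟨C, hC⟩ := ((isCompact_sphere (0 : E) 1).prod (isCompact_Icc (a := (0 : ℝ)) (b := 2)))
    |>.exists_bound_of_continuousOn (f := fun p ↦ p.2 ^ (finrank ℝ E - 1) • g (p.2 • p.1))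
      (by fun_prop)
  exact ⟨C, fun e he ρ hρ ↦ (convex_Icc 0 2).norm_image_sub_le_of_norm_hasDerivWithin_le
    (fun r _ ↦ (hasDerivAt_segmentIntegral hg e r).hasDerivWithinAt)
    (fun r hr ↦ hC (e, r) ⟨he, hr⟩) ⟨zero_le_one, one_le_two⟩ hρ⟩

variable [MeasurableSpace E] [BorelSpace E] (μ : Measure E) [μ.IsAddHaarMeasure] {y : E}

lemma integrable_segmentIntegral_ballRadial (hg : Continuous g) (hy : ‖y‖ < 1) :
    Integrable (fun e : sphere (0 : E) 1 ↦ segmentIntegral g (e : E) (ballRadial y e))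
      μ.toSphere := by
  simpa only [integral_Ioi_indicator_closedBall_eq_segmentIntegral (norm_eq_of_mem_sphere _) hy]
    using integrable_radial_integral (integrable_indicator_closedBall μ hg y 1)

lemma setIntegral_closedBall_eq_integral_segmentIntegral [Nontrivial E] (hg : Continuous g)
    (hy : ‖y‖ < 1) :
    ∫ u in closedBall y 1, g u ∂μ =
      ∫ e : sphere (0 : E) 1, segmentIntegral g (e : E) (ballRadial y e) ∂μ.toSphere := by
  rw [← integral_indicator measurableSet_closedBall,
    integral_eq_integral_toSphere (integrable_indicator_closedBall μ hg y 1)]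
  simp only [integral_Ioi_indicator_closedBall_eq_segmentIntegral (norm_eq_of_mem_sphere _) hy]

theorem hasFDerivAt_setIntegral_closedBall_zero [Nontrivial E] [CompleteSpace F]
    (hg : Continuous g) :
    HasFDerivAt (fun y ↦ ∫ u in closedBall y 1, g u ∂μ)
      (∫ e : sphere (0 : E) 1, (innerSL ℝ (e : E)).smulRight (g e) ∂μ.toSphere) 0 := by
  obtain ⟨C, hC⟩ := exists_forall_norm_segmentIntegral_sub_le hg
  have hC0 : 0 ≤ C := by
    obtain ⟨e, he⟩ := exists_norm_eq E zero_le_one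
    simpa using (norm_nonneg _).trans (hC e (by simpa) 0 (by simp))
  have hlip (e : sphere (0 : E) 1) (y : E) (hy : y ∈ ball (0 : E) 1) :
      ‖segmentIntegral g (e : E) (ballRadial y e) -
        segmentIntegral g (e : E) (ballRadial 0 (e : E))‖ ≤ C * ‖y - 0‖ := by
    rw [mem_ball_zero_iff] at hy
    have hρ := abs_ballRadial_sub_one_le (norm_eq_of_mem_sphere e) hy
    have hρ2 : ballRadial y (e : E) ≤ 2 := by linarith [le_abs_self (ballRadial y (e : E) - 1)]
    rw [ballRadial_zero, sub_zero]
    exact (hC e e.2 _ ⟨(ballRadial_pos hy).le, hρ2⟩).trans (mul_le_mul_of_nonneg_left hρ hC0)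
  have hmeas : Continuous fun e : sphere (0 : E) 1 ↦ (innerSL ℝ (e : E)).smulRight (g e) := by
    fun_prop
  have hderiv := (hasFDerivAt_integral_of_dominated_loc_of_lip' (ball_mem_nhds (0 : E) one_pos)
    (fun y hy ↦ (integrable_segmentIntegral_ballRadial μ hg
      (mem_ball_zero_iff.1 hy)).aestronglyMeasurable)
    (integrable_segmentIntegral_ballRadial μ hg (by simp)) hmeas.aestronglyMeasurable
    (.of_forall hlip) (integrable_const C)
    (.of_forall fun e ↦ hasFDerivAt_segmentIntegral_ballRadial_zero hg (e : E))).2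
  refine hderiv.congr_of_eventuallyEq ?_
  filter_upwards [ball_mem_nhds (0 : E) one_pos] with y hy
  exact setIntegral_closedBall_eq_integral_segmentIntegral μ hg (mem_ball_zero_iff.1 hy)

theorem hasFDerivAt_setIntegral_closedBall_add_smul [Nontrivial E] [CompleteSpace F]
    {f : E → F} (hf : Continuous f) {γ : ℝ} (hγ : γ ≠ 0) (x : E) :
    HasFDerivAt (fun z ↦ ∫ u in closedBall 0 1, f (z + γ • u) ∂μ)
      (γ⁻¹ • ∫ e : sphere (0 : E) 1, (innerSL ℝ (e : E)).smulRight (f (x + γ • (e : E)))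
        ∂μ.toSphere) x := by
  have hscale : HasFDerivAt (fun z ↦ γ⁻¹ • (z - x)) (γ⁻¹ • ContinuousLinearMap.id ℝ E) x :=
    ((hasFDerivAt_id x).sub_const x).const_smul γ⁻¹
  have hball : HasFDerivAt (fun y ↦ ∫ u in closedBall y 1, f (x + γ • u) ∂μ)
      (∫ e : sphere (0 : E) 1, (innerSL ℝ (e : E)).smulRight (f (x + γ • (e : E))) ∂μ.toSphere)
      (γ⁻¹ • (x - x)) := by
    rw [sub_self, smul_zero]
    exact hasFDerivAt_setIntegral_closedBall_zero μ (by fun_prop)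
  convert hball.comp x hscale using 1
  · ext z
    rw [Function.comp_apply,
      setIntegral_closedBall_eq_setIntegral_closedBall_zero μ _ (γ⁻¹ • (z - x))]
    simp only [smul_add, smul_inv_smul₀ hγ, add_sub_cancel, ← add_assoc]
  · rw [ContinuousLinearMap.comp_smul, ContinuousLinearMap.comp_id]

lemma toDual_integral_smul_toSphere {f : sphere (0 : E) 1 → ℝ} (hf : Continuous f) :
    InnerProductSpace.toDual ℝ E (∫ e, f e • (e : E) ∂μ.toSphere) =
      ∫ e : sphere (0 : E) 1, (innerSL ℝ (e : E)).smulRight (f e) ∂μ.toSphere := by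
  have hint : Integrable (fun e : sphere (0 : E) 1 ↦ f e • (e : E)) μ.toSphere :=
    (hf.smul continuous_subtype_val).integrable_of_hasCompactSupport (.of_compactSpace _)
  refine ((innerSL ℝ).integral_comp_comm hint).symm.trans
    (integral_congr_ae (.of_forall fun e ↦ ?_))
  ext v
  simp only [ContinuousLinearMap.smulRight_apply, map_smul, smul_apply, smul_eq_mul,
    mul_comm]

theorem hasGradientAt_setAverage_closedBall_add_smul [Nontrivial E] {f : E → ℝ}
    (hf : Continuous f) {γ : ℝ} (hγ : γ ≠ 0) (x : E) :
    HasGradientAt (fun z ↦ ⨍ u in closedBall 0 1, f (z + γ • u) ∂μ)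
      (⨍ e : sphere (0 : E) 1, (finrank ℝ E / γ * f (x + γ • (e : E))) • (e : E) ∂μ.toSphere)
      x := by
  have hvol : μ.toSphere.real univ = finrank ℝ E * μ.real (closedBall 0 1) := by
    rw [μ.toSphere_real_apply_univ, measureReal_def, measureReal_def,
      Measure.addHaar_closedBall_eq_addHaar_ball]
  have hdim : (finrank ℝ E : ℝ) ≠ 0 := Nat.cast_ne_zero.2 finrank_pos.ne'
  have hgrad : ⨍ e : sphere (0 : E) 1, (finrank ℝ E / γ * f (x + γ • (e : E))) • (e : E)
        ∂μ.toSphere =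
      (μ.real (closedBall 0 1))⁻¹ • γ⁻¹ • ∫ e : sphere (0 : E) 1, f (x + γ • (e : E)) • (e : E)
        ∂μ.toSphere := by
    simp only [average_eq, hvol, mul_smul, integral_smul]
    rw [smul_smul, smul_smul]
    congr 1
    field_simp
  rw [hasGradientAt_iff_hasFDerivAt, hgrad, map_smul, map_smul,
    toDual_integral_smul_toSphere μ (by fun_prop)]
  simp only [average_eq, measureReal_restrict_apply_univ]
  exact (hasFDerivAt_setIntegral_closedBall_add_smul μ hf hγ x).const_smul
    (μ.real (closedBall 0 1))⁻¹

end BallIntegral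

theorem l2_smoothing_gradient_formula_general {E : Type*} [NormedAddCommGroup E]
    [InnerProductSpace ℝ E] [FiniteDimensional ℝ E] [MeasurableSpace E] [BorelSpace E]
    [Nontrivial E] {f : E → ℝ} (hf : Continuous f) {γ : ℝ} (hγ : γ ≠ 0) (x : E) :
    HasGradientAt (fun z ↦ ⨍ u in closedBall (0 : E) 1, f (z + γ • u))
      (⨍ e in sphere (0 : E) 1, (finrank ℝ E / γ * f (x + γ • e)) • e ∂μH[finrank ℝ E - 1]) x := by
  rw [setAverage_sphere_hausdorffMeasure_eq_average_toSphere]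
  exact hasGradientAt_setAverage_closedBall_add_smul volume hf hγ x

section EuclideanSpace

variable {d : ℕ} {F : Type*} [NormedAddCommGroup F] [NormedSpace ℝ F]

lemma integral_uniformOn_l2Ball (f : EuclideanSpace ℝ (Fin d) → F) :
    ∫ u, f u ∂uniformOn (l2Ball d) = ⨍ u in closedBall 0 1, f u := by
  have hball : l2Ball d = closedBall 0 1 := by ext u; simp [l2Ball]
  rw [hball, uniformOn, setAverage_eq']

lemma integral_uniformOnSphere_l2Sphere (f : EuclideanSpace ℝ (Fin d) → F) :
    ∫ e, f e ∂uniformOnSphere (l2Sphere d) = ⨍ e in sphere 0 1, f e ∂μH[(d : ℝ) - 1] := by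
  have hsphere : l2Sphere d = sphere 0 1 := by ext u; simp [l2Sphere]
  rw [hsphere, uniformOnSphere, setAverage_eq']

end EuclideanSpace

/-- The Euclidean-ball smoothing `f_γ` of an `M`-Lipschitz function `f` is
differentiable, with gradient `∇f_γ(x) = E_e[(d/γ)·f(x+γe)·e]`, `e` uniform on the Euclidean
unit sphere. -/
theorem l2_smoothing_gradient_formula {d : ℕ} (hd : 1 ≤ d) (γ M : ℝ) (hγ : 0 < γ)
    (f fγ : EuclideanSpace ℝ (Fin d) → ℝ)
    (hlip : ∀ x y : EuclideanSpace ℝ (Fin d), |f y - f x| ≤ M * ‖y - x‖)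
    (hfγ : ∀ x, fγ x = ∫ e, f (x + γ • e) ∂(uniformOn (l2Ball d)))
    (x : EuclideanSpace ℝ (Fin d)) :
    HasGradientAt fγ
      (∫ e, (d / γ * f (x + γ • e)) • e ∂(uniformOnSphere (l2Sphere d))) x := by
  have : NeZero d := ⟨by omega⟩
  have hf : Continuous f := (LipschitzWith.of_dist_le' fun x y ↦ by
    rw [Real.dist_eq, dist_eq_norm]
    exact hlip y x).continuous
  simp only [funext hfγ, integral_uniformOn_l2Ball, integral_uniformOnSphere_l2Sphere]
  simpa only [finrank_euclideanSpace_fin] using l2_smoothing_gradient_formula_general hf hγ.ne' x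
end

section
/- Let d ≥ 1, ε > 0, and let f : ℝ^d → ℝ be convex and M₂-Lipschitz with respect to the l₂-norm, attaining its minimum at x*. Let γ = √d·ε/(4M₂) and let f_γ(x) := E[f(x + γ·ẽ)], where ẽ is uniformly distributed on the unit l₁-ball B₁^d(1). Then for any point x̂ satisfying f_γ(x̂) − inf_{x} f_γ(x) ≤ ε/2, one has f(x̂) − f(x*) ≤ ε. -/
open MeasureTheory
open scoped ENNReal RealInnerProductSpace

/-!
Smoothing by a centred measure can only raise a convex function (Jensen), and raises a
`K`-Lipschitz one by at most `K * γ * E‖e‖`. For the uniform distribution on the `l₁`-ball,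
`E‖e‖ ≤ √(2 / d)`: the cap `{u ∈ B₁ | t < u i}` is contained in the half ball `{u ∈ B₁ | 0 < u i}`
shrunk by the factor `1 - t` and translated by `t` along the `i`-th axis, so
`P(|e i| > t) ≤ (1 - t) ^ d`, and the layer cake formula gives `E (e i)² ≤ 2 / ((d + 1) (d + 2))`.
With the given `γ` the smoothing error at the minimizer is thus at most `(√2 / 4) ε ≤ ε / 2`.
-/

section ApproximateMinimizers

variable {α : Type*} {f g : α → ℝ} {a b : α} {δ η : ℝ}

theorem sub_le_add_of_sub_iInf_le (hfg : ∀ x, f x ≤ g x) (hmin : ∀ x, f a ≤ f x)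
    (hga : g a ≤ f a + δ) (hgb : g b - ⨅ x, g x ≤ η) : f b - f a ≤ δ + η := by
  have hbdd : BddBelow (Set.range g) :=
    ⟨f a, Set.forall_mem_range.2 fun x => (hmin x).trans (hfg x)⟩
  linarith [ciInf_le hbdd a, hfg b]

end ApproximateMinimizers

section Smoothing

variable {E : Type*} [NormedAddCommGroup E] [NormedSpace ℝ E] {f : E → ℝ} {K : NNReal}

theorem abs_add_smul_sub_le_of_lipschitzWith (hf : LipschitzWith K f) (x e : E) (γ : ℝ) :
    |f (x + γ • e) - f x| ≤ K * |γ| * ‖e‖ := by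
  simpa [dist_eq_norm, norm_smul, mul_assoc] using hf.dist_le_mul (x + γ • e) x

variable [MeasurableSpace E] {μ : Measure E}

theorem integrable_comp_add_smul_of_lipschitzWith [IsFiniteMeasure μ] (hf : LipschitzWith K f)
    (hμ : Integrable (fun e => e) μ) (x : E) (γ : ℝ) :
    Integrable (fun e => f (x + γ • e)) μ := by
  have hmeas : AEStronglyMeasurable (fun e => f (x + γ • e)) μ :=
    hf.continuous.comp_aestronglyMeasurable
      (aestronglyMeasurable_const.add (hμ.aestronglyMeasurable.const_smul γ))
  have hdiff : Integrable (fun e => f (x + γ • e) - f x) μ :=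
    (hμ.norm.const_mul (K * |γ|)).mono' (hmeas.sub aestronglyMeasurable_const)
      (.of_forall fun e => abs_add_smul_sub_le_of_lipschitzWith hf x e γ)
  simpa only [sub_eq_add_neg, integrable_add_const_iff] using hdiff

variable [IsProbabilityMeasure μ]

theorem le_integral_comp_add_smul_of_convexOn [CompleteSpace E] (hconv : ConvexOn ℝ Set.univ f)
    (hcont : Continuous f) (hμ : Integrable (fun e => e) μ) (hmean : ∫ e, e ∂μ = 0) {x : E} {γ : ℝ}
    (hint : Integrable (fun e => f (x + γ • e)) μ) : f x ≤ ∫ e, f (x + γ • e) ∂μ := by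
  have hcenter : ∫ e, (x + γ • e) ∂μ = x := by
    rw [integral_add (integrable_const x) (hμ.fun_smul γ), integral_smul, hmean]
    simp
  calc f x = f (∫ e, (x + γ • e) ∂μ) := by rw [hcenter]
    _ ≤ ∫ e, f (x + γ • e) ∂μ :=
      hconv.map_integral_le hcont.continuousOn isClosed_univ (.of_forall fun _ => Set.mem_univ _)
        ((integrable_const x).add (hμ.smul γ)) hint

theorem integral_comp_add_smul_le_of_lipschitzWith (hf : LipschitzWith K f)
    (hμ : Integrable (fun e => e) μ) (x : E) (γ : ℝ) :
    ∫ e, f (x + γ • e) ∂μ ≤ f x + K * |γ| * ∫ e, ‖e‖ ∂μ := by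
  have hbound : Integrable (fun e : E => K * |γ| * ‖e‖) μ := hμ.norm.const_mul _
  calc ∫ e, f (x + γ • e) ∂μ ≤ ∫ e, (f x + K * |γ| * ‖e‖) ∂μ := by
        refine integral_mono (integrable_comp_add_smul_of_lipschitzWith hf hμ x γ)
          ((integrable_const _).add hbound) fun e => ?_
        linarith [(abs_le.1 (abs_add_smul_sub_le_of_lipschitzWith hf x e γ)).2]
    _ = f x + K * |γ| * ∫ e, ‖e‖ ∂μ := by
        rw [integral_add (integrable_const _) hbound, integral_const_mul]
        simp

theorem sub_le_add_of_smoothing_sub_iInf_le [CompleteSpace E] (hconv : ConvexOn ℝ Set.univ f)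
    (hf : LipschitzWith K f) (hμ : Integrable (fun e => e) μ) (hmean : ∫ e, e ∂μ = 0)
    {a b : E} {γ η : ℝ} (hmin : ∀ x, f a ≤ f x)
    (hb : ∫ e, f (b + γ • e) ∂μ - ⨅ x, ∫ e, f (x + γ • e) ∂μ ≤ η) :
    f b - f a ≤ K * |γ| * ∫ e, ‖e‖ ∂μ + η :=
  sub_le_add_of_sub_iInf_le
    (fun x => le_integral_comp_add_smul_of_convexOn hconv hf.continuous hμ hmean
      (integrable_comp_add_smul_of_lipschitzWith hf hμ x γ))
    hmin (integral_comp_add_smul_le_of_lipschitzWith hf hμ a γ) hb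

end Smoothing

section Moments

variable {Ω : Type*} [MeasurableSpace Ω] {μ : Measure Ω} {X : Ω → ℝ}

theorem sq_integral_le_integral_sq [IsProbabilityMeasure μ] (hX : MemLp X 2 μ) :
    (∫ ω, X ω ∂μ) ^ 2 ≤ ∫ ω, X ω ^ 2 ∂μ := by
  have hvar := ProbabilityTheory.variance_nonneg X μ
  rw [ProbabilityTheory.variance_eq_sub hX] at hvar
  simpa using hvar

theorem integral_one_sub_pow_mul_self (n : ℕ) :
    ∫ t in (0 : ℝ)..1, (1 - t) ^ n * t = 1 / ((n + 1) * (n + 2)) := by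
  have hreflect : ∫ t in (0 : ℝ)..1, (1 - t) ^ n * t =
      ∫ t in (0 : ℝ)..1, (t ^ n - t ^ (n + 1)) := by
    have hsubst := intervalIntegral.integral_comp_sub_left (a := 0) (b := 1)
      (fun t : ℝ => t ^ n - t ^ (n + 1)) 1
    rw [sub_self, sub_zero] at hsubst
    rw [← hsubst]
    congr! 2 with t
    ring
  rw [hreflect, intervalIntegral.integral_sub ((continuous_pow _).intervalIntegrable _ _)
    ((continuous_pow _).intervalIntegrable _ _), integral_pow, integral_pow]
  push_cast
  simp only [one_pow, zero_pow (Nat.succ_ne_zero _), sub_zero]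
  field_simp
  ring

theorem lintegral_Ioi_ofReal_one_sub_pow_mul {n : ℕ} (hn : n ≠ 0) :
    ∫⁻ t in Set.Ioi (0 : ℝ), ENNReal.ofReal (1 - t) ^ n * ENNReal.ofReal t =
      ENNReal.ofReal (1 / ((n + 1) * (n + 2))) := by
  have htail : ∀ t ∈ Set.Ioi (1 : ℝ), ENNReal.ofReal (1 - t) ^ n * ENNReal.ofReal t = 0 := by
    intro t ht
    rw [ENNReal.ofReal_of_nonpos (sub_nonpos.2 (le_of_lt ht)), zero_pow hn, zero_mul]
  have hreal : ∀ t ∈ Set.Ioc (0 : ℝ) 1, ENNReal.ofReal (1 - t) ^ n * ENNReal.ofReal t =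
      ENNReal.ofReal ((1 - t) ^ n * t) := by
    intro t ht
    have hle : 0 ≤ 1 - t := sub_nonneg.2 ht.2
    rw [ENNReal.ofReal_mul (pow_nonneg hle n), ENNReal.ofReal_pow hle]
  rw [← Set.Ioc_union_Ioi_eq_Ioi zero_le_one,
    lintegral_union measurableSet_Ioi (Set.Ioc_disjoint_Ioi le_rfl),
    setLIntegral_congr_fun measurableSet_Ioi htail, lintegral_zero, add_zero,
    setLIntegral_congr_fun measurableSet_Ioc hreal, ← integral_one_sub_pow_mul_self,
    intervalIntegral.integral_of_le zero_le_one, ofReal_integral_eq_lintegral_ofReal]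
  · exact Continuous.integrableOn_Ioc (by fun_prop)
  · filter_upwards [ae_restrict_mem measurableSet_Ioc] with t ht
    exact mul_nonneg (pow_nonneg (sub_nonneg.2 ht.2) n) ht.1.le

theorem integral_sq_le_of_meas_lt_abs_le (hX : AEMeasurable X μ) {n : ℕ} (hn : n ≠ 0)
    (htail : ∀ t, 0 < t → μ {ω | t < |X ω|} ≤ ENNReal.ofReal (1 - t) ^ n) :
    ∫ ω, X ω ^ 2 ∂μ ≤ 2 / ((n + 1) * (n + 2)) := by
  rw [integral_eq_lintegral_of_nonneg_ae (.of_forall fun ω => sq_nonneg _)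
    (hX.pow_const 2).aestronglyMeasurable]
  refine ENNReal.toReal_le_of_le_ofReal (by positivity) ?_
  calc ∫⁻ ω, ENNReal.ofReal (X ω ^ 2) ∂μ
      = ∫⁻ ω, ENNReal.ofReal (|X ω| ^ (2 : ℝ)) ∂μ := by simp
    _ = ENNReal.ofReal 2 * ∫⁻ t in Set.Ioi (0 : ℝ),
          μ {ω | t < |X ω|} * ENNReal.ofReal (t ^ ((2 : ℝ) - 1)) :=
        lintegral_rpow_eq_lintegral_meas_lt_mul μ (.of_forall fun ω => abs_nonneg _)
          hX.abs two_pos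
    _ ≤ ENNReal.ofReal 2 * ∫⁻ t in Set.Ioi (0 : ℝ),
          ENNReal.ofReal (1 - t) ^ n * ENNReal.ofReal t := by
        gcongr ENNReal.ofReal 2 * ?_
        refine setLIntegral_mono' measurableSet_Ioi fun t ht => ?_
        have hexp : (2 : ℝ) - 1 = 1 := by norm_num
        rw [hexp, Real.rpow_one]
        gcongr
        exact htail t ht
    _ = ENNReal.ofReal (2 / ((n + 1) * (n + 2))) := by
        rw [lintegral_Ioi_ofReal_one_sub_pow_mul hn, ← ENNReal.ofReal_mul zero_le_two, mul_one_div]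

end Moments

section UniformOn

variable {d : ℕ} {S : Set (EuclideanSpace ℝ (Fin d))}

theorem uniformOn_eq_cond (S : Set (EuclideanSpace ℝ (Fin d))) :
    uniformOn S = ProbabilityTheory.cond volume S :=
  rfl

theorem integrable_uniformOn_of_continuous {F : Type*} [NormedAddCommGroup F]
    {g : EuclideanSpace ℝ (Fin d) → F} (hS : IsCompact S) (hg : Continuous g) :
    Integrable g (uniformOn S) := by
  by_cases hvol : volume S = 0
  · rw [uniformOn_eq_cond, ProbabilityTheory.cond_eq_zero_of_meas_eq_zero hvol]
    exact integrable_zero_measure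
  · exact (hg.continuousOn.integrableOn_compact hS).smul_measure (ENNReal.inv_ne_top.2 hvol)

theorem integral_id_uniformOn_eq_zero (hS : -S = S) : ∫ e, e ∂uniformOn S = 0 := by
  have hneg := (Measure.measurePreserving_neg volume).setIntegral_preimage_emb
    (MeasurableEquiv.neg (EuclideanSpace ℝ (Fin d))).measurableEmbedding (fun e => e) S
  rw [Set.neg_preimage, hS, integral_neg] at hneg
  have : IsAddTorsionFree (EuclideanSpace ℝ (Fin d)) := .of_module_rat _
  rw [uniformOn, integral_smul_measure, neg_eq_self.1 hneg, smul_zero]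

end UniformOn

section SumAbs

variable {ι : Type*} [Fintype ι]

theorem norm_le_sum_abs (u : EuclideanSpace ℝ ι) : ‖u‖ ≤ ∑ i, |u i| := by
  rw [EuclideanSpace.norm_eq]
  refine Real.sqrt_le_iff.2 ⟨Finset.sum_nonneg fun i _ => abs_nonneg _, ?_⟩
  exact Finset.sum_sq_le_sq_sum_of_nonneg fun i _ => abs_nonneg _

theorem sum_abs_sub_single [DecidableEq ι] (u : EuclideanSpace ℝ ι) (i : ι) {t : ℝ}
    (ht : 0 ≤ t) (htu : t ≤ u i) : ∑ j, |(u - EuclideanSpace.single i t) j| = ∑ j, |u j| - t := by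
  have hcoord : ∀ j, |(u - EuclideanSpace.single i t) j| = |u j| - if j = i then t else 0 := by
    intro j
    rcases eq_or_ne j i with rfl | hji
    · simp [abs_of_nonneg (ht.trans htu), abs_of_nonneg (sub_nonneg.2 htu)]
    · simp [hji]
  rw [Finset.sum_congr rfl fun j _ => hcoord j, Finset.sum_sub_distrib]
  simp

end SumAbs

section L1Ball

open scoped Pointwise

variable {d : ℕ}

theorem isClosed_l1Ball : IsClosed (l1Ball d) :=
  isClosed_le (by fun_prop) continuous_const

theorem isCompact_l1Ball : IsCompact (l1Ball d) :=
  (isCompact_closedBall 0 1).of_isClosed_subset isClosed_l1Ball fun u hu =>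
    mem_closedBall_zero_iff.2 ((norm_le_sum_abs u).trans hu)

theorem neg_l1Ball : -l1Ball d = l1Ball d := by
  ext u
  simp [l1Ball]

theorem volume_l1Ball_ne_top : volume (l1Ball d) ≠ ∞ :=
  isCompact_l1Ball.measure_ne_top

theorem volume_l1Ball_ne_zero : volume (l1Ball d) ≠ 0 := by
  have hopen : IsOpen {u : EuclideanSpace ℝ (Fin d) | ∑ i, |u i| < 1} :=
    isOpen_lt (by fun_prop) continuous_const
  have hsub : {u : EuclideanSpace ℝ (Fin d) | ∑ i, |u i| < 1} ⊆ l1Ball d :=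
    fun u (hu : ∑ i, |u i| < 1) => hu.le
  exact ((hopen.measure_pos volume ⟨0, by simp⟩).trans_le (measure_mono hsub)).ne'

instance isProbabilityMeasure_uniformOn_l1Ball : IsProbabilityMeasure (uniformOn (l1Ball d)) :=
  ProbabilityTheory.cond_isProbabilityMeasure_of_finite volume_l1Ball_ne_zero volume_l1Ball_ne_top

/-- The cap of the unit `l₁`-ball beyond height `t` along the `i`-th axis; `l1Cap i 0` is half of
the ball, up to a null set. -/
def l1Cap (i : Fin d) (t : ℝ) : Set (EuclideanSpace ℝ (Fin d)) :=
  l1Ball d ∩ {u | t < u i}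

theorem measurableSet_l1Cap (i : Fin d) (t : ℝ) : MeasurableSet (l1Cap i t) :=
  isClosed_l1Ball.measurableSet.inter (isOpen_lt continuous_const (by fun_prop)).measurableSet

theorem l1Cap_subset_vadd_smul (i : Fin d) {t : ℝ} (ht₀ : 0 ≤ t) (ht₁ : t < 1) :
    l1Cap i t ⊆ EuclideanSpace.single i t +ᵥ (1 - t) • l1Cap i 0 := by
  rintro u ⟨hu : ∑ j, |u j| ≤ 1, hui : t < u i⟩
  have hpos : 0 < 1 - t := sub_pos.2 ht₁
  rw [Set.mem_vadd_set_iff_neg_vadd_mem, vadd_eq_add, neg_add_eq_sub,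
    Set.mem_smul_set_iff_inv_smul_mem₀ hpos.ne']
  constructor
  · change ∑ j, |((1 - t)⁻¹ • (u - EuclideanSpace.single i t)) j| ≤ 1
    simp only [PiLp.smul_apply, smul_eq_mul, abs_mul, ← Finset.mul_sum,
      sum_abs_sub_single u i ht₀ hui.le, abs_of_pos (inv_pos.2 hpos)]
    rw [inv_mul_le_iff₀ hpos]
    linarith
  · simpa using mul_pos (inv_pos.2 hpos) (sub_pos.2 hui)

theorem l1Cap_eq_empty (i : Fin d) {t : ℝ} (ht : 1 ≤ t) : l1Cap i t = ∅ := by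
  refine Set.eq_empty_of_forall_notMem ?_
  rintro u ⟨hu : ∑ j, |u j| ≤ 1, hui : t < u i⟩
  have hcoord : |u i| ≤ ∑ j, |u j| :=
    Finset.single_le_sum (f := fun j => |u j|) (fun j _ => abs_nonneg _) (Finset.mem_univ i)
  linarith [le_abs_self (u i)]

theorem volume_l1Cap_le (i : Fin d) {t : ℝ} (ht : 0 ≤ t) :
    volume (l1Cap i t) ≤ ENNReal.ofReal (1 - t) ^ d * volume (l1Cap i 0) := by
  rcases lt_or_ge t 1 with ht₁ | ht₁
  · have hnonneg : 0 ≤ 1 - t := (sub_pos.2 ht₁).le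
    calc volume (l1Cap i t)
        ≤ volume (EuclideanSpace.single i t +ᵥ (1 - t) • l1Cap i 0) :=
          measure_mono (l1Cap_subset_vadd_smul i ht ht₁)
      _ = ENNReal.ofReal (1 - t) ^ d * volume (l1Cap i 0) := by
          rw [measure_vadd, Measure.addHaar_smul_of_nonneg _ hnonneg, finrank_euclideanSpace_fin,
            ENNReal.ofReal_pow hnonneg]
  · simp [l1Cap_eq_empty i ht₁]

theorem volume_l1Ball_inter_lt_abs (i : Fin d) {t : ℝ} (ht : 0 ≤ t) :
    volume (l1Ball d ∩ {u | t < |u i|}) = 2 * volume (l1Cap i t) := by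
  have hunion : l1Ball d ∩ {u | t < |u i|} = l1Cap i t ∪ -l1Cap i t := by
    rw [l1Cap, Set.inter_neg, neg_l1Ball, ← Set.inter_union_distrib_left]
    congr 1
    ext u
    simp [lt_abs]
  have hdisj : Disjoint (l1Cap i t) (-l1Cap i t) := by
    refine Set.disjoint_left.2 ?_
    rintro u ⟨-, hu : t < u i⟩ ⟨-, hu' : t < -u i⟩
    linarith
  rw [hunion, measure_union hdisj (measurableSet_l1Cap i t).neg, Measure.measure_neg, two_mul]

theorem uniformOn_l1Ball_lt_abs_le (i : Fin d) {t : ℝ} (ht : 0 ≤ t) :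
    uniformOn (l1Ball d) {u | t < |u i|} ≤ ENNReal.ofReal (1 - t) ^ d := by
  rw [uniformOn_eq_cond, ProbabilityTheory.cond_apply isClosed_l1Ball.measurableSet, mul_comm,
    ← div_eq_mul_inv]
  refine ENNReal.div_le_of_le_mul ?_
  calc volume (l1Ball d ∩ {u | t < |u i|})
      = 2 * volume (l1Cap i t) := volume_l1Ball_inter_lt_abs i ht
    _ ≤ 2 * (ENNReal.ofReal (1 - t) ^ d * volume (l1Cap i 0)) := by
        gcongr
        exact volume_l1Cap_le i ht
    _ = ENNReal.ofReal (1 - t) ^ d * volume (l1Ball d ∩ {u | 0 < |u i|}) := by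
        rw [volume_l1Ball_inter_lt_abs i le_rfl, mul_left_comm]
    _ ≤ ENNReal.ofReal (1 - t) ^ d * volume (l1Ball d) := by
        gcongr
        exact Set.inter_subset_left

theorem integral_sq_apply_uniformOn_l1Ball_le (i : Fin d) :
    ∫ e, e i ^ 2 ∂uniformOn (l1Ball d) ≤ 2 / ((d + 1) * (d + 2)) :=
  integral_sq_le_of_meas_lt_abs_le (by fun_prop) (Fin.pos i).ne'
    fun _ ht => uniformOn_l1Ball_lt_abs_le i ht.le

theorem integral_norm_sq_uniformOn_l1Ball_le :
    ∫ e, ‖e‖ ^ 2 ∂uniformOn (l1Ball d) ≤ 2 * d / ((d + 1) * (d + 2)) := by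
  simp_rw [EuclideanSpace.real_norm_sq_eq]
  rw [integral_finsetSum _ fun i _ =>
    integrable_uniformOn_of_continuous isCompact_l1Ball (by fun_prop)]
  calc ∑ i, ∫ e, e i ^ 2 ∂uniformOn (l1Ball d)
      ≤ ∑ _i : Fin d, 2 / ((d + 1) * (d + 2) : ℝ) :=
        Finset.sum_le_sum fun i _ => integral_sq_apply_uniformOn_l1Ball_le i
    _ = 2 * d / ((d + 1) * (d + 2)) := by
        rw [Finset.sum_const, Finset.card_univ, Fintype.card_fin, nsmul_eq_mul]
        ring

theorem sqrt_mul_integral_norm_uniformOn_l1Ball_le :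
    √d * ∫ e, ‖e‖ ∂uniformOn (l1Ball d) ≤ √2 := by
  have hmem : MemLp (fun e => ‖e‖) 2 (uniformOn (l1Ball d)) :=
    (memLp_two_iff_integrable_sq (by fun_prop)).2
      (integrable_uniformOn_of_continuous isCompact_l1Ball (by fun_prop))
  refine Real.le_sqrt_of_sq_le ?_
  calc (√(d : ℝ) * ∫ e, ‖e‖ ∂uniformOn (l1Ball d)) ^ 2
      = (d : ℝ) * (∫ e, ‖e‖ ∂uniformOn (l1Ball d)) ^ 2 := by
        rw [mul_pow, Real.sq_sqrt d.cast_nonneg]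
    _ ≤ (d : ℝ) * (2 * d / ((d + 1) * (d + 2))) := by
        gcongr
        exact (sq_integral_le_integral_sq hmem).trans integral_norm_sq_uniformOn_l1Ball_le
    _ ≤ 2 := by
        rw [← mul_div_assoc, div_le_iff₀ (by positivity)]
        nlinarith [d.cast_nonneg (α := ℝ)]

end L1Ball

/-- With `γ = √d·ε/(4M₂)`, an `ε/2`-approximate minimizer of the
`l₁`-smoothed function `f_γ` is an `ε`-approximate minimizer of `f`. -/
theorem l1_smoothing_accuracy_transfer {d : ℕ} (hd : 1 ≤ d) (ε M₂ γ : ℝ)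
    (hε : 0 < ε) (hM₂ : 0 < M₂)
    (f fγ : EuclideanSpace ℝ (Fin d) → ℝ)
    (hconv : ConvexOn ℝ Set.univ f)
    (hlip : ∀ x y : EuclideanSpace ℝ (Fin d), |f y - f x| ≤ M₂ * ‖y - x‖)
    (xstar : EuclideanSpace ℝ (Fin d)) (hmin : ∀ x, f xstar ≤ f x)
    (hγ : γ = Real.sqrt d * ε / (4 * M₂))
    (hfγ : ∀ x, fγ x = ∫ e, f (x + γ • e) ∂(uniformOn (l1Ball d)))
    (xhat : EuclideanSpace ℝ (Fin d))
    (hxhat : fγ xhat - ⨅ x, fγ x ≤ ε / 2) :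
    f xhat - f xstar ≤ ε := by
  have hf : LipschitzWith ⟨M₂, hM₂.le⟩ f :=
    LipschitzWith.of_dist_le_mul fun x y => by
      rw [dist_eq_norm, dist_eq_norm]
      exact hlip y x
  have hid : Integrable (fun e => e) (uniformOn (l1Ball d)) :=
    integrable_uniformOn_of_continuous isCompact_l1Ball continuous_id
  have htransfer : f xhat - f xstar ≤ M₂ * |γ| * ∫ e, ‖e‖ ∂uniformOn (l1Ball d) + ε / 2 := by
    simp only [hfγ] at hxhat
    exact sub_le_add_of_smoothing_sub_iInf_le hconv hf hid
      (integral_id_uniformOn_eq_zero neg_l1Ball) hmin hxhat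
  have hscale : M₂ * |γ| = ε / 4 * √d := by
    rw [hγ, abs_of_nonneg (by positivity)]
    field_simp
  have hgap : M₂ * |γ| * ∫ e, ‖e‖ ∂uniformOn (l1Ball d) ≤ ε / 2 := by
    calc M₂ * |γ| * ∫ e, ‖e‖ ∂uniformOn (l1Ball d)
        = ε / 4 * (√d * ∫ e, ‖e‖ ∂uniformOn (l1Ball d)) := by rw [hscale, mul_assoc]
      _ ≤ ε / 4 * √2 := by
          gcongr
          exact sqrt_mul_integral_norm_uniformOn_l1Ball_le
      _ ≤ ε / 2 := by nlinarith [Real.sqrt_two_lt_three_halves]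
  linarith
end
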